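/- arXiv:2203.05514 — 2 statements merged into one kernel-verified Lean document; each statement's English description precedes it below -/
import Mathlib

section
/- Define Ψ : ℝ³ → ℝ² by Ψ(x,y,z) = ( z(−y + xz)/(1 + z²), z(x + yz)/(1 + z²) ). Then for every (r,s) ∈ ℝ² with r² + s² = 1 and every t ∈ ℝ, Ψ(r − t·s, s + t·r, t) = (−t·s, t·r). Consequently, Ψ restricted to the fiber P⁻¹{(r,s)} = {(r − ts, s + tr, t) : t ∈ ℝ} of the hyperboloid ℋ over (r,s) is a bijection onto the line {λ·(−s, r) : λ ∈ ℝ} ⊂ ℝ², linear in the fiber parameter t; this identifies the fiber of ℋ over (r,s) with the tangent line to S¹ at (r,s). -/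
/-- With `Ψ(x,y,z) = (z(−y+xz)/(1+z²), z(x+yz)/(1+z²))`, for every
`(r,s)` on the unit circle and every `t`, `Ψ(r − ts, s + tr, t) = (−ts, tr)`; hence
`Ψ` maps the fiber `{(r − ts, s + tr, t) : t ∈ ℝ}` of the hyperboloid over `(r,s)`
bijectively (linearly in `t`) onto the tangent line `{λ·(−s, r) : λ ∈ ℝ}` to the
circle at `(r,s)`. -/
theorem stmt12 :
    let Ψ : ℝ × ℝ × ℝ → ℝ × ℝ := fun p =>
      (p.2.2 * (-p.2.1 + p.1 * p.2.2) / (1 + p.2.2 ^ 2),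
        p.2.2 * (p.1 + p.2.1 * p.2.2) / (1 + p.2.2 ^ 2))
    ∀ r s : ℝ, r ^ 2 + s ^ 2 = 1 →
      (∀ t : ℝ, Ψ (r - t * s, s + t * r, t) = (-(t * s), t * r)) ∧
      Set.BijOn Ψ {p : ℝ × ℝ × ℝ | ∃ t : ℝ, p = (r - t * s, s + t * r, t)}
        {q : ℝ × ℝ | ∃ l : ℝ, q = l • ((-s, r) : ℝ × ℝ)} := by
  intro Ψ r s h
  have key : ∀ t : ℝ, Ψ (r - t * s, s + t * r, t) = (-(t * s), t * r) := by
    intro t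
    have ht : (1 + t ^ 2 : ℝ) ≠ 0 := by positivity
    simp only [Ψ, Prod.mk.injEq]
    constructor
    · rw [div_eq_iff ht]; ring
    · rw [div_eq_iff ht]; ring
  refine ⟨key, ?_, ?_, ?_⟩
  · rintro p ⟨t, rfl⟩
    refine ⟨t, ?_⟩
    rw [key]
    simp
  · rintro p ⟨t, rfl⟩ q ⟨u, rfl⟩ hpq
    rw [key, key, Prod.mk.injEq] at hpq
    obtain ⟨h1, h2⟩ := hpq
    have htu : t = u := by linear_combination (u - t) * h + r * h2 - s * h1
    rw [htu]
  · rintro q ⟨l, rfl⟩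
    refine ⟨_, ⟨l, rfl⟩, ?_⟩
    rw [key]
    simp
end

section
/- Let (x₀, y₀, z₀) ∈ ℝ³ with x₀² + y₀² − z₀² = 1, and define the curve γ₁(t) = ( (x₀+y₀z₀)/(1+z₀²), (y₀−x₀z₀)/(1+z₀²), 0 ) + (t + z₀)·( (−y₀+x₀z₀)/(1+z₀²), (x₀+y₀z₀)/(1+z₀²), 1 ). Then: (i) γ₁(t) lies on the hyperboloid ℋ for all t ∈ ℝ; (ii) γ₁(0) = (x₀, y₀, z₀); and (iii) the composition P ∘ γ₁ is constant, equal to ( (x₀+y₀z₀)/(1+z₀²), (y₀−x₀z₀)/(1+z₀²) ). Hence γ₁ is a vertical curve through (x₀,y₀,z₀). -/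
/-- For `(x₀,y₀,z₀)` on the hyperboloid `x² + y² − z² = 1`, the curve
`γ₁(t) = ((x₀+y₀z₀)/(1+z₀²), (y₀−x₀z₀)/(1+z₀²), 0) + (t+z₀)·((−y₀+x₀z₀)/(1+z₀²), (x₀+y₀z₀)/(1+z₀²), 1)`
lies on the hyperboloid, passes through `(x₀,y₀,z₀)` at `t = 0`, and projects under
`P(x,y,z) = ((x+yz)/(1+z²), (y−xz)/(1+z²))` to the constant
`((x₀+y₀z₀)/(1+z₀²), (y₀−x₀z₀)/(1+z₀²))`; hence `γ₁` is a vertical curve. -/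
theorem stmt13 (x₀ y₀ z₀ : ℝ) (h : x₀ ^ 2 + y₀ ^ 2 - z₀ ^ 2 = 1) :
    let P : ℝ × ℝ × ℝ → ℝ × ℝ := fun p =>
      ((p.1 + p.2.1 * p.2.2) / (1 + p.2.2 ^ 2), (p.2.1 - p.1 * p.2.2) / (1 + p.2.2 ^ 2))
    let γ₁ : ℝ → ℝ × ℝ × ℝ := fun t =>
      ((x₀ + y₀ * z₀) / (1 + z₀ ^ 2) + (t + z₀) * ((-y₀ + x₀ * z₀) / (1 + z₀ ^ 2)),
        (y₀ - x₀ * z₀) / (1 + z₀ ^ 2) + (t + z₀) * ((x₀ + y₀ * z₀) / (1 + z₀ ^ 2)),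
        0 + (t + z₀) * 1)
    (∀ t : ℝ, (γ₁ t).1 ^ 2 + (γ₁ t).2.1 ^ 2 - (γ₁ t).2.2 ^ 2 = 1) ∧
    γ₁ 0 = (x₀, y₀, z₀) ∧
    (∀ t : ℝ, P (γ₁ t) = ((x₀ + y₀ * z₀) / (1 + z₀ ^ 2), (y₀ - x₀ * z₀) / (1 + z₀ ^ 2))) := by
  intro P γ₁
  have hD : (1 + z₀ ^ 2) ≠ 0 := by positivity
  have hneg : (-y₀ + x₀ * z₀) / (1 + z₀ ^ 2) = -((y₀ - x₀ * z₀) / (1 + z₀ ^ 2)) := by ring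
  have hab : ((x₀ + y₀ * z₀) / (1 + z₀ ^ 2)) ^ 2 + ((y₀ - x₀ * z₀) / (1 + z₀ ^ 2)) ^ 2 = 1 := by
    rw [div_pow, div_pow, ← add_div, div_eq_one_iff_eq (pow_ne_zero 2 hD)]
    linear_combination (1 + z₀ ^ 2) * h
  have hx : (x₀ + y₀ * z₀) / (1 + z₀ ^ 2) - z₀ * ((y₀ - x₀ * z₀) / (1 + z₀ ^ 2)) = x₀ := by
    field_simp
    ring
  have hy : (y₀ - x₀ * z₀) / (1 + z₀ ^ 2) + z₀ * ((x₀ + y₀ * z₀) / (1 + z₀ ^ 2)) = y₀ := by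
    field_simp
    ring
  simp only [P, γ₁, hneg]
  generalize (x₀ + y₀ * z₀) / (1 + z₀ ^ 2) = a at *
  generalize (y₀ - x₀ * z₀) / (1 + z₀ ^ 2) = b at *
  refine ⟨fun t => ?_, ?_, fun t => ?_⟩
  · linear_combination (1 + (t + z₀) ^ 2) * hab
  · refine Prod.ext ?_ (Prod.ext ?_ ?_)
    · show a + (0 + z₀) * -b = x₀
      linear_combination hx
    · show b + (0 + z₀) * a = y₀
      linear_combination hy
    · show 0 + (0 + z₀) * 1 = z₀
      ring
  · have hs : (1 + (0 + (t + z₀) * 1) ^ 2) ≠ 0 := by positivity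
    refine Prod.ext ?_ ?_
    · show _ / _ = a
      rw [div_eq_iff hs]
      ring
    · show _ / _ = b
      rw [div_eq_iff hs]
      ring
end
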